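/- (Comparison theorem for Rodov splines) Let r and k be integers, f ∈ L^r_{∞,∞}, and let ψ be a spline of one of the following three forms: (i) ψ = α·ψ_r(a,b,0) with α,b > 0, a ≥ 0, r ≥ 3, 0 < k < r−1, and M_0(f) ≤ M_0(ψ), M_{r−1}(f) ≤ M_{r−1}(ψ), M_r(f) ≤ M_r(ψ); (ii) ψ = α·ψ_r(0,b,c) with α,b > 0, c ≥ 0, r ≥ 4, 0 < k < r−2, and M_0(f) ≤ M_0(ψ), M_{r−2}(f) ≤ M_{r−2}(ψ), M_r(f) ≤ M_r(ψ); (iii) ψ = α·ψ_r(a,b,c) with α,b > 0, a,c ≥ 0, r ≥ 4, 0 < k < r−2, and M_0(f) ≤ M_0(ψ), M_{r−2}(f) ≤ M_{r−2}(ψ), M_{r−1}(f) ≤ M_{r−1}(ψ), M_r(f) ≤ M_r(ψ). If ξ, η ∈ ℝ are such that f(ξ) = ψ(η), then |f'(ξ)| ≤ |ψ'(η)|. -/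

import Mathlib

open MeasureTheory Filter

noncomputable section

/-- The uniform norm `‖f‖ = sup_{t ∈ ℝ} |f t|` of a function `f : ℝ → ℝ`. -/
def unif (f : ℝ → ℝ) : ℝ := ⨆ t : ℝ, |f t|

/-- `M k f = ‖f⁽ᵏ⁾‖`, the uniform norm of the `k`-th derivative of `f`. -/
def M (k : ℕ) (f : ℝ → ℝ) : ℝ := unif (iteratedDeriv k f)

/-- The class `L^r_{∞,∞}`: bounded functions `f : ℝ → ℝ` having `r-1` (continuous)
derivatives, with `f⁽ʳ⁻¹⁾` locally absolutely continuous and `f⁽ʳ⁾` essentially bounded;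
the last two conditions are equivalent to `f⁽ʳ⁻¹⁾` being Lipschitz. -/
def MemL (r : ℕ) (f : ℝ → ℝ) : Prop :=
  Continuous f ∧ (∃ C : ℝ, ∀ t : ℝ, |f t| ≤ C) ∧ ContDiff ℝ (r - 1 : ℕ) f ∧
    ∃ K : NNReal, LipschitzWith K (iteratedDeriv (r - 1) f)

/-- The Euler perfect spline `φ_r`: the `r`-th `2π`-periodic antiderivative with zero
mean value of `t ↦ sgn (sin t)`. -/
def eulerPhi : ℕ → ℝ → ℝ
  | 0 => fun t => Real.sign (Real.sin t)
  | (s + 1) => fun t =>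
      (∫ x in (0:ℝ)..t, eulerPhi s x) -
        (1 / (2 * Real.pi)) * ∫ x in (0:ℝ)..(2 * Real.pi), ∫ u in (0:ℝ)..x, eulerPhi s u

/-- `φ_{λ,r}(t) = λ^{-r} φ_r (λ t)`. -/
def eulerPhiL (lam : ℝ) (r : ℕ) (t : ℝ) : ℝ := lam ^ (-(r : ℤ)) * eulerPhi r (lam * t)

/-- The basic step function: `0` on `[0,a]`, `1` on `(a, a+b]`, `0` after `a+b`. -/
def psiBase (a b : ℝ) (t : ℝ) : ℝ := if t ≤ a then 0 else if t ≤ a + b then 1 else 0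

/-- `psiBase` continued evenly with respect to the point `a+b+c`. -/
def psiHalf (a b c t : ℝ) : ℝ :=
  if t ≤ a + b + c then psiBase a b t else psiBase a b (2 * (a + b + c) - t)

/-- The Rodov step function `ψ_0(a,b,c)`: equal to `psiBase` on `[0, a+b+c]`, continued
evenly with respect to `a+b+c`, then oddly with respect to `2(a+b+c)`, then
`4(a+b+c)`-periodically. -/
def psiZero (a b c t : ℝ) : ℝ :=
  if (t - 4 * (a + b + c) * ⌊t / (4 * (a + b + c))⌋) ≤ 2 * (a + b + c) then
    psiHalf a b c (t - 4 * (a + b + c) * ⌊t / (4 * (a + b + c))⌋)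
  else
    -psiHalf a b c (4 * (a + b + c) - (t - 4 * (a + b + c) * ⌊t / (4 * (a + b + c))⌋))

/-- `ψ_s(a,b,c)`: the `s`-th periodic antiderivative of `ψ_0(a,b,c)` with zero mean
value over the period `[0, 4(a+b+c)]`. -/
def psi : ℕ → ℝ → ℝ → ℝ → ℝ → ℝ
  | 0 => psiZero
  | (s + 1) => fun a b c t =>
      (∫ x in (0:ℝ)..t, psi s a b c x) -
        (1 / (4 * (a + b + c))) *
          ∫ x in (0:ℝ)..(4 * (a + b + c)), ∫ u in (0:ℝ)..x, psi s a b c u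

/-- The modulus of continuity `ω(D^k, X; δ) = sup {‖f⁽ᵏ⁾‖ : f ∈ X, ‖f‖ ≤ δ}` of the
differentiation operator `D^k` on a class `X`. -/
def omegaMod (k : ℕ) (X : Set (ℝ → ℝ)) (δ : ℝ) : ℝ :=
  sSup {y : ℝ | ∃ f ∈ X, M 0 f ≤ δ ∧ M k f = y}

end

/-!
Recentred at a zero, every spline `α ψ_s` with `s ≥ 1` is a wave that is determined by a quarter of
its period, on which it may have a flat piece at the zero and at the top. The statement carried
from `f⁽ⁱ⁺¹⁾` to `f⁽ⁱ⁾` says that a function which reaches a level of the wave never falls faster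
than the wave does from that level. For `f⁽ʳ⁻¹⁾` and `α ψ_1` this is the Lipschitz condition.

Suppose it holds for `f'` and `φ`, let `Φ` be the primitive wave of `φ`, and let `|f| ≤ Φ_max`. If
`f` met `Φ` with a larger slope, then `f'` would stay above `φ` long enough to make `f` drop below
`-Φ_max`; hence slopes are ordered at every crossing, and integrating this order gives the statement
for `f` and `Φ`. This uses `|f'| ≤ φ_max`. When `φ` has no flat top, that bound follows from
`|f| ≤ Φ_max` by scaling `f` down; for the flat top of `ψ_1`, of half-length `a`, it is the
condition on `M_{r-1}`, and for the flat top of `ψ_2`, of half-length `c`, the one on `M_{r-2}`.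
-/

open Set Topology

/-! ### Quarter waves -/

/-- A `4 L`-periodic wave described by its quarter `[0, L]`: it vanishes on `[0, σ]`, increases
strictly on `[σ, ρ]`, is constant on `[ρ, L]`, and is continued oddly about `0` and evenly about
`L`. All the splines `ψ_s` with `s ≥ 1`, recentred at a zero, have this shape. -/
structure QuarterWave (φ : ℝ → ℝ) (L σ ρ : ℝ) : Prop where
  zero_le : 0 ≤ σ
  lt : σ < ρ
  le : ρ ≤ L
  odd : φ.Odd
  symm : ∀ x, φ (2 * L - x) = φ x
  eq_zero : ∀ x ∈ Icc 0 σ, φ x = 0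
  eq_top : ∀ x ∈ Icc ρ L, φ x = φ L
  strictMonoOn : StrictMonoOn φ (Icc σ ρ)
  continuous : Continuous φ

namespace QuarterWave

variable {φ Φ : ℝ → ℝ} {L σ ρ x : ℝ}

lemma lt_quarter (h : QuarterWave φ L σ ρ) : σ < L :=
  h.lt.trans_le h.le

lemma quarter_pos (h : QuarterWave φ L σ ρ) : 0 < L :=
  h.zero_le.trans_lt h.lt_quarter

lemma monotoneOn (h : QuarterWave φ L σ ρ) : MonotoneOn φ (Icc 0 L) := by
  have hzero : MonotoneOn φ (Icc 0 σ) := fun x hx y hy _ =>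
    (h.eq_zero x hx).trans_le (h.eq_zero y hy).ge
  have htop : MonotoneOn φ (Icc ρ L) := fun x hx y hy _ =>
    (h.eq_top x hx).trans_le (h.eq_top y hy).ge
  have hlow := hzero.union_right h.strictMonoOn.monotoneOn (isGreatest_Icc h.zero_le)
    (isLeast_Icc h.lt.le)
  rw [Icc_union_Icc_eq_Icc h.zero_le h.lt.le] at hlow
  have hall := hlow.union_right htop (isGreatest_Icc (h.zero_le.trans h.lt.le)) (isLeast_Icc h.le)
  rwa [Icc_union_Icc_eq_Icc (h.zero_le.trans h.lt.le) h.le] at hall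

lemma pos (h : QuarterWave φ L σ ρ) (hx : x ∈ Ioc σ L) : 0 < φ x := by
  have hmin : σ < min x ρ := lt_min hx.1 h.lt
  calc
    0 = φ σ := (h.eq_zero σ ⟨h.zero_le, le_rfl⟩).symm
    _ < φ (min x ρ) := h.strictMonoOn ⟨le_rfl, h.lt.le⟩ ⟨hmin.le, min_le_right _ _⟩ hmin
    _ ≤ φ x := h.monotoneOn ⟨h.zero_le.trans hmin.le, (min_le_left _ _).trans hx.2⟩
        ⟨h.zero_le.trans hx.1.le, hx.2⟩ (min_le_left _ _)

lemma top_pos (h : QuarterWave φ L σ ρ) : 0 < φ L :=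
  h.pos ⟨h.lt_quarter, le_rfl⟩

lemma apply_neg_eq (h : QuarterWave φ L σ ρ) (hx : x ∈ Icc ρ L) : φ (-x) = -φ L := by
  rw [h.odd, h.eq_top x hx]

lemma antiperiodic (h : QuarterWave φ L σ ρ) : φ.Antiperiodic (2 * L) := fun x => by
  rw [← h.odd, ← h.symm (-x), sub_neg_eq_add, add_comm]

lemma periodic (h : QuarterWave φ L σ ρ) : φ.Periodic (4 * L) := by
  have := h.antiperiodic.periodic_two_mul
  rwa [show 2 * (2 * L) = 4 * L by ring] at this

lemma exists_mem_Icc_eq {σ' ρ' : ℝ} (h : QuarterWave φ L σ ρ) (H : QuarterWave Φ L σ' ρ') (x : ℝ) :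
    ∃ y ∈ Icc (-L) L, Φ x = Φ y ∧ |φ (x + L)| = |φ (y + L)| := by
  have hper : Function.Periodic (fun x => (Φ x, φ (x + L))) (4 * L) := fun x => by
    simp only [H.periodic x, add_right_comm x, h.periodic (x + L)]
  obtain ⟨y, hy, hxy⟩ := hper.exists_mem_Ico (mul_pos four_pos h.quarter_pos) x (-L)
  obtain ⟨hΦ, hφ⟩ := Prod.mk.inj hxy
  rcases le_total y L with hyL | hyL
  · exact ⟨y, ⟨hy.1, hyL⟩, hΦ, by rw [hφ]⟩
  · refine ⟨2 * L - y, ⟨by linarith [hy.2], by linarith⟩, by rw [H.symm, hΦ], ?_⟩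
    rw [hφ, ← h.symm (2 * L - y + L), show 2 * L - (2 * L - y + L) = -(L - y) by ring, h.odd,
      abs_neg, ← h.symm (y + L), show 2 * L - (y + L) = L - y by ring]

lemma abs_le_top (h : QuarterWave φ L σ ρ) (x : ℝ) : |φ x| ≤ φ L := by
  have hquarter : ∀ y ∈ Icc 0 L, |φ y| ≤ φ L := fun y hy => by
    have hLL : L ∈ Icc 0 L := ⟨h.quarter_pos.le, le_rfl⟩
    rw [abs_of_nonneg (h.odd.map_zero.symm.le.trans (h.monotoneOn ⟨le_rfl, hLL.1⟩ hy hy.1))]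
    exact h.monotoneOn hy hLL hy.2
  obtain ⟨y, ⟨hLy, hyL⟩, hxy, -⟩ := h.exists_mem_Icc_eq h x
  rw [hxy]
  rcases le_total 0 y with hy | hy
  · exact hquarter y ⟨hy, hyL⟩
  · rw [← abs_neg, ← h.odd]
    exact hquarter (-y) ⟨by linarith, by linarith⟩

lemma apply_add_quarter_pos (h : QuarterWave φ L σ ρ) (hx : x ∈ Ioo (-(L - σ)) (L - σ)) :
    0 < φ (x + L) := by
  rcases le_total x 0 with hx0 | hx0
  · exact h.pos ⟨by linarith [hx.1], by linarith⟩
  · rw [← h.symm]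
    exact h.pos ⟨by linarith [hx.2], by linarith⟩

lemma strictMonoOn_primitive (h : QuarterWave φ L σ ρ)
    (hΦ : ∀ x, HasDerivAt Φ (φ (x + L)) x) : StrictMonoOn Φ (Icc (-(L - σ)) (L - σ)) := by
  refine strictMonoOn_of_deriv_pos (convex_Icc _ _)
    (fun x _ => (hΦ x).continuousAt.continuousWithinAt) fun x hx => ?_
  rw [interior_Icc] at hx
  rw [(hΦ x).deriv]
  exact h.apply_add_quarter_pos hx

/-- Integration moves the zeros to the extrema, so the flat piece of `φ` around `0` becomes the
flat top of `Φ`. -/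
lemma primitive (h : QuarterWave φ L σ ρ) (hΦ : ∀ x, HasDerivAt Φ (φ (x + L)) x)
    (hodd : Φ.Odd) (hsymm : ∀ x, Φ (2 * L - x) = Φ x) : QuarterWave Φ L 0 (L - σ) where
  zero_le := le_rfl
  lt := sub_pos.2 h.lt_quarter
  le := sub_le_self _ h.zero_le
  odd := hodd
  symm := hsymm
  eq_zero x hx := by rw [le_antisymm hx.2 hx.1, hodd.map_zero]
  eq_top x hx := by
    have hflat : ∀ y ∈ Ico (L - σ) L, φ (y + L) = 0 := fun y hy => by
      rw [← h.symm]
      exact h.eq_zero _ ⟨by linarith [hy.2], by linarith [hy.1]⟩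
    have hconst := constant_of_has_deriv_right_zero (a := L - σ) (b := L)
      (fun y _ => (hΦ y).continuousAt.continuousWithinAt)
      fun y hy => hflat y hy ▸ (hΦ y).hasDerivWithinAt
    rw [hconst x hx, hconst L ⟨sub_le_self _ h.zero_le, le_rfl⟩]
  strictMonoOn := (h.strictMonoOn_primitive hΦ).mono
    (Icc_subset_Icc_left (neg_nonpos.2 (sub_pos.2 h.lt_quarter).le))
  continuous := continuous_iff_continuousAt.2 fun x => (hΦ x).continuousAt

end QuarterWave

/-! ### Comparison of a function with a wave -/

/-- Wherever `f` reaches the level `φ η`, it remains, at every distance `|s|` on either side, above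
the level that `φ` has fallen to at distance `|s|` to the left of `η`; only arguments of `φ` in
`[σ, ρ]` are considered. -/
def StaysAbove (f φ : ℝ → ℝ) (σ ρ : ℝ) : Prop :=
  ∀ ξ η s, σ ≤ η - |s| → η ≤ ρ → φ η ≤ f ξ → φ (η - |s|) ≤ f (ξ - s)

/-- `StaysAbove` for every contraction `κ f`, `|κ| ≤ 1`, of `f` that respects the amplitude `φ L`.
This is the induction hypothesis of the comparison argument: it does not presuppose `|f| ≤ φ L`. -/
def ScaledStaysAbove (f φ : ℝ → ℝ) (L σ ρ : ℝ) : Prop :=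
  ∀ κ, |κ| ≤ 1 → (∀ x, |κ * f x| ≤ φ L) → StaysAbove (fun x => κ * f x) φ σ ρ

lemma hasDerivAt_comp_neg {f f' : ℝ → ℝ} (hf : ∀ x, HasDerivAt f (f' x) x) (x : ℝ) :
    HasDerivAt (fun x => f (-x)) (-f' (-x)) x :=
  ((hf (-x)).comp x (hasDerivAt_neg x)).congr_deriv (mul_neg_one _)

lemma hasDerivAt_neg_comp_neg {f f' : ℝ → ℝ} (hf : ∀ x, HasDerivAt f (f' x) x) (x : ℝ) :
    HasDerivAt (fun x => -f (-x)) (f' (-x)) x :=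
  (hasDerivAt_comp_neg hf x).neg.congr_deriv (neg_neg _)

lemma abs_mul_le_of_abs_le_one {κ u v : ℝ} (hκ : |κ| ≤ 1) (hu : |u| ≤ v) : |κ * u| ≤ v := by
  rw [abs_mul]
  exact (mul_le_of_le_one_left (abs_nonneg u) hκ).trans hu

namespace StaysAbove

variable {f f' φ Φ : ℝ → ℝ} {L σ ρ σ' ρ' ξ e B : ℝ}

lemma mono (hS : StaysAbove f φ σ ρ) (hσ : σ ≤ σ') (hρ : ρ' ≤ ρ) : StaysAbove f φ σ' ρ' :=
  fun ξ η s hs hη => hS ξ η s (hσ.trans hs) (hη.trans hρ)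

lemma comp_neg (hS : StaysAbove f φ σ ρ) : StaysAbove (fun x => f (-x)) φ σ ρ :=
  fun ξ η s hs hη hle => by
    have := hS (-ξ) η (-s) (by rwa [abs_neg]) hη hle
    rwa [abs_neg, show -ξ - -s = -(ξ - s) by ring] at this

lemma sub_le_sub_left (hS : StaysAbove f' φ σ ρ) (hΦ : ∀ x, HasDerivAt Φ (φ (x + L)) x)
    (hf : ∀ x, HasDerivAt f (f' x) x) (he : e ∈ Icc σ ρ) (hle : φ e ≤ f' ξ) :
    Φ (e - L) - Φ (σ - L) ≤ f ξ - f (ξ - (e - σ)) := by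
  have hderiv : ∀ s, HasDerivAt (fun s => Φ (e - L - s) - f (ξ - s)) (-φ (e - s) + f' (ξ - s)) s :=
    fun s => by
      refine (((hΦ _).comp_const_sub (e - L) s).sub ((hf _).comp_const_sub ξ s)).congr_deriv ?_
      rw [show e - L - s + L = e - s by ring, sub_neg_eq_add]
  have hmono : MonotoneOn (fun s => Φ (e - L - s) - f (ξ - s)) (Icc 0 (e - σ)) := by
    refine monotoneOn_of_deriv_nonneg (convex_Icc _ _)
      (fun s _ => (hderiv s).continuousAt.continuousWithinAt)
      (fun s _ => (hderiv s).differentiableAt.differentiableWithinAt) fun s hs => ?_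
    rw [interior_Icc] at hs
    rw [(hderiv s).deriv]
    have := hS ξ e s (by rw [abs_of_pos hs.1]; linarith [hs.2]) he.2 hle
    rw [abs_of_pos hs.1] at this
    linarith
  have heσ : 0 ≤ e - σ := sub_nonneg.2 he.1
  have := hmono ⟨le_rfl, heσ⟩ ⟨heσ, le_rfl⟩ heσ
  simp only [sub_zero] at this
  rw [show e - L - (e - σ) = σ - L by ring] at this
  linarith

lemma sub_le_sub_right (hS : StaysAbove f' φ σ ρ) (hΦ : ∀ x, HasDerivAt Φ (φ (x + L)) x)
    (hf : ∀ x, HasDerivAt f (f' x) x) (he : e ∈ Icc σ ρ) (hle : φ e ≤ f' ξ) :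
    Φ (e - L) - Φ (σ - L) ≤ f (ξ + (e - σ)) - f ξ := by
  have := hS.comp_neg.sub_le_sub_left (ξ := -ξ) hΦ (hasDerivAt_neg_comp_neg hf) he
    (by rwa [neg_neg])
  rw [show -(-ξ - (e - σ)) = ξ + (e - σ) by ring, neg_neg] at this
  linarith

lemma sub_le_of_abs_le (hS : StaysAbove f' φ σ ρ) (hΦ : ∀ x, HasDerivAt Φ (φ (x + L)) x)
    (hf : ∀ x, HasDerivAt f (f' x) x) (hB : ∀ x, |f x| ≤ B) (he : e ∈ Icc σ ρ)
    (hle : φ e ≤ f' ξ) : Φ (e - L) - Φ (σ - L) ≤ B := by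
  have hleft := hS.sub_le_sub_left hΦ hf he hle
  have hright := hS.sub_le_sub_right hΦ hf he hle
  linarith [(abs_le.1 (hB (ξ - (e - σ)))).1, (abs_le.1 (hB (ξ + (e - σ)))).2]

end StaysAbove

namespace ScaledStaysAbove

variable {f φ : ℝ → ℝ} {L σ ρ σ' ρ' κ : ℝ}

lemma mono (hS : ScaledStaysAbove f φ L σ ρ) (hσ : σ ≤ σ') (hρ : ρ' ≤ ρ) :
    ScaledStaysAbove f φ L σ' ρ' :=
  fun κ hκ hb => (hS κ hκ hb).mono hσ hρ

lemma const_mul (hS : ScaledStaysAbove f φ L σ ρ) (hκ : |κ| ≤ 1) :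
    ScaledStaysAbove (fun x => κ * f x) φ L σ ρ := fun μ hμ hb => by
  simp only [← mul_assoc] at hb ⊢
  exact hS (μ * κ) (abs_mul_le_of_abs_le_one hμ hκ) hb

lemma staysAbove (hS : ScaledStaysAbove f φ L σ ρ) (hb : ∀ x, |f x| ≤ φ L) :
    StaysAbove f φ σ ρ := by
  simpa only [one_mul] using hS 1 abs_one.le (by simpa only [one_mul] using hb)

lemma staysAbove_neg (hS : ScaledStaysAbove f φ L σ ρ) (hb : ∀ x, |f x| ≤ φ L) :
    StaysAbove (fun x => -f x) φ σ ρ := by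
  simpa only [neg_one_mul] using
    hS (-1) (by rw [abs_neg, abs_one]) (by simpa only [neg_one_mul, abs_neg] using hb)

end ScaledStaysAbove

lemma eq_zero_of_abs_le_of_hasDerivAt {f : ℝ → ℝ} {B d ξ : ℝ} (hB : ∀ x, |f x| ≤ B)
    (hξ : |f ξ| = B) (hd : HasDerivAt f d ξ) : d = 0 := by
  rcases abs_choice (f ξ) with hpos | hneg
  · have hmax : IsLocalMax f ξ :=
      Eventually.of_forall fun x => ((le_abs_self _).trans (hB x)).trans (hξ.symm.trans hpos).le
    exact hmax.hasDerivAt_eq_zero hd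
  · have hmin : IsLocalMin f ξ :=
      Eventually.of_forall fun x => by linarith [neg_abs_le (f x), hB x]
    exact hmin.hasDerivAt_eq_zero hd

/-- Running along `Φ` slightly too fast makes the slopes at a crossing strictly ordered. -/
lemma apply_accelerated_le_of_forall_crossing {f f' Φ Φ' : ℝ → ℝ} {A B ξ η s ε : ℝ}
    (hΦ : ∀ x, HasDerivAt Φ (Φ' x) x) (hf : ∀ x, HasDerivAt f (f' x) x)
    (hpos : ∀ x ∈ Ioo A B, 0 < Φ' x) (hcross : ∀ ξ, ∀ η ∈ Ioo A B, f ξ = Φ η → f' ξ ≤ Φ' η)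
    (hε : 0 < ε) (hs : 0 ≤ s) (hA : A < η - ε - (1 + ε) * s) (hB : η ≤ B) (hle : Φ η ≤ f ξ) :
    Φ (η - ε - (1 + ε) * s) ≤ f (ξ - s) := by
  have hs' : 0 ≤ (1 + ε) * s := by positivity
  have hΦε : ∀ t, HasDerivAt (fun t => Φ (η - ε - (1 + ε) * t))
      (Φ' (η - ε - (1 + ε) * t) * -((1 + ε) * 1)) t := fun t =>
    (hΦ _).comp t (((hasDerivAt_id t).const_mul (1 + ε)).const_sub (η - ε))
  have hstart : Φ (η - ε) ≤ Φ η := by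
    have hmono : StrictMonoOn Φ (Icc (η - ε) η) := by
      refine strictMonoOn_of_deriv_pos (convex_Icc _ _)
        (fun x _ => (hΦ x).continuousAt.continuousWithinAt) fun x hx => ?_
      rw [interior_Icc] at hx
      rw [(hΦ x).deriv]
      exact hpos x ⟨by linarith [hx.1], hx.2.trans_le hB⟩
    have hlt : η - ε < η := sub_lt_self _ hε
    exact (hmono ⟨le_rfl, hlt.le⟩ ⟨hlt.le, le_rfl⟩ hlt).le
  refine image_le_of_deriv_right_lt_deriv_boundary
    (fun t _ => (hΦε t).continuousAt.continuousWithinAt) (fun t _ => (hΦε t).hasDerivWithinAt)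
    (B := fun t => f (ξ - t)) (by simpa only [mul_zero, sub_zero] using hstart.trans hle)
    (fun t => (hf _).comp_const_sub ξ t) (fun t ht hE => ?_) (right_mem_Icc.2 hs)
  have hmem : η - ε - (1 + ε) * t ∈ Ioo A B := by
    have hlow : 0 ≤ (1 + ε) * t := mul_nonneg (by positivity) ht.1
    have hup : (1 + ε) * t ≤ (1 + ε) * s := mul_le_mul_of_nonneg_left ht.2.le (by positivity)
    exact ⟨by linarith, by linarith⟩
  have hslope := hcross (ξ - t) _ hmem hE.symm
  linarith [mul_pos hε (hpos _ hmem)]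

lemma apply_sub_le_of_forall_crossing {f f' Φ Φ' : ℝ → ℝ} {A B ξ η s : ℝ}
    (hΦ : ∀ x, HasDerivAt Φ (Φ' x) x) (hf : ∀ x, HasDerivAt f (f' x) x)
    (hpos : ∀ x ∈ Ioo A B, 0 < Φ' x) (hcross : ∀ ξ, ∀ η ∈ Ioo A B, f ξ = Φ η → f' ξ ≤ Φ' η)
    (hs : 0 ≤ s) (hA : A < η - s) (hB : η ≤ B) (hle : Φ η ≤ f ξ) : Φ (η - s) ≤ f (ξ - s) := by
  have harg : Tendsto (fun ε : ℝ => η - ε - (1 + ε) * s) (𝓝[>] 0) (𝓝 (η - s)) := by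
    have hcont : Continuous fun ε : ℝ => η - ε - (1 + ε) * s := by fun_prop
    simpa using (hcont.tendsto 0).mono_left nhdsWithin_le_nhds
  refine le_of_tendsto ((hΦ (η - s)).continuousAt.tendsto.comp harg) ?_
  filter_upwards [self_mem_nhdsWithin, harg.eventually_const_lt hA] with ε hε hAε
  exact apply_accelerated_le_of_forall_crossing hΦ hf hpos hcross hε hs hAε hB hle

namespace StaysAbove

variable {f f' φ Φ : ℝ → ℝ} {L σ ρ ξ η B : ℝ}

lemma deriv_le_of_nonpos (hS : StaysAbove f' φ σ ρ) (h : QuarterWave φ L σ ρ)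
    (H : QuarterWave Φ L 0 (L - σ)) (hΦ : ∀ x, HasDerivAt Φ (φ (x + L)) x)
    (hf : ∀ x, HasDerivAt f (f' x) x) (hfΦ : ∀ x, |f x| ≤ Φ L) (hfφ : ∀ x, f' x ≤ φ L)
    (hη : η ∈ Icc (-(L - σ)) 0) (heq : f ξ = Φ η) : f' ξ ≤ φ (η + L) := by
  by_contra! hlt
  have hηρ : η + L < ρ := by
    by_contra! hρ
    rw [h.eq_top _ ⟨hρ, by linarith [hη.2]⟩] at hlt
    exact hlt.not_ge (hfφ ξ)
  obtain ⟨e, he, hηe, heρ⟩ : ∃ e, φ e < f' ξ ∧ e ∈ Ioo (η + L) ρ :=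
    ((((h.continuous.tendsto (η + L)).eventually_lt_const hlt).filter_mono
      nhdsWithin_le_nhds).and (Ioo_mem_nhdsGT hηρ)).exists
  have hfall := hS.sub_le_sub_left hΦ hf ⟨by linarith [hη.1], heρ.le⟩ he.le
  rw [← neg_sub L σ, H.apply_neg_eq ⟨le_rfl, sub_le_self _ h.zero_le⟩, heq] at hfall
  have hrise : Φ η < Φ (e - L) := h.strictMonoOn_primitive hΦ
    ⟨hη.1, by linarith [hη.2, h.lt_quarter]⟩
    ⟨by linarith [hη.1], by linarith [h.le, h.lt_quarter]⟩ (by linarith)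
  linarith [(abs_le.1 (hfΦ (ξ - (e - σ)))).1]

lemma deriv_le (hS : StaysAbove f' φ σ ρ) (h : QuarterWave φ L σ ρ)
    (H : QuarterWave Φ L 0 (L - σ)) (hΦ : ∀ x, HasDerivAt Φ (φ (x + L)) x)
    (hf : ∀ x, HasDerivAt f (f' x) x) (hfΦ : ∀ x, |f x| ≤ Φ L) (hfφ : ∀ x, f' x ≤ φ L)
    (hη : η ∈ Icc (-(L - σ)) (L - σ)) (heq : f ξ = Φ η) : f' ξ ≤ φ (η + L) := by
  rcases le_total η 0 with hη0 | hη0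
  · exact hS.deriv_le_of_nonpos h H hΦ hf hfΦ hfφ ⟨hη.1, hη0⟩ heq
  · have hrefl := hS.comp_neg.deriv_le_of_nonpos (ξ := -ξ) (η := -η) h H hΦ
      (hasDerivAt_neg_comp_neg hf) (fun x => by rw [abs_neg]; exact hfΦ _) (fun x => hfφ _)
      ⟨neg_le_neg hη.2, neg_nonpos.2 hη0⟩ (by rw [neg_neg, H.odd, heq])
    rwa [neg_neg, ← h.symm, show 2 * L - (-η + L) = η + L by ring] at hrefl

lemma abs_deriv_le (hS : StaysAbove f' φ σ ρ) (hS' : StaysAbove (fun x => -f' x) φ σ ρ)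
    (h : QuarterWave φ L σ ρ) (H : QuarterWave Φ L 0 (L - σ))
    (hΦ : ∀ x, HasDerivAt Φ (φ (x + L)) x) (hf : ∀ x, HasDerivAt f (f' x) x)
    (hfΦ : ∀ x, |f x| ≤ Φ L) (hfφ : ∀ x, |f' x| ≤ φ L) (heq : f ξ = Φ η) :
    |f' ξ| ≤ |φ (η + L)| := by
  obtain ⟨y, hy, hΦy, hφy⟩ := h.exists_mem_Icc_eq H η
  rw [hφy]
  rw [hΦy] at heq
  by_cases hyσ : y ∈ Icc (-(L - σ)) (L - σ)
  · have hup := hS.deriv_le h H hΦ hf hfΦ (fun x => (abs_le.1 (hfφ x)).2) hyσ heq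
    have hdown := hS'.comp_neg.deriv_le (ξ := -ξ) h H hΦ (hasDerivAt_comp_neg hf)
      (fun x => hfΦ _) (fun x => neg_le.1 (abs_le.1 (hfφ _)).1) hyσ (by rw [neg_neg, heq])
    rw [neg_neg] at hdown
    exact (abs_le.2 ⟨neg_le.1 hdown, hup⟩).trans (le_abs_self _)
  · have hextremal : |f ξ| = Φ L := by
      rw [heq]
      rcases le_total y 0 with hy0 | hy0
      · rw [← neg_neg y, H.apply_neg_eq ⟨?_, by linarith [hy.1]⟩, abs_neg,
          abs_of_pos H.top_pos]
        by_contra! hlt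
        exact hyσ ⟨by linarith, by linarith [h.lt_quarter]⟩
      · rw [H.eq_top y ⟨?_, hy.2⟩, abs_of_pos H.top_pos]
        by_contra! hlt
        exact hyσ ⟨by linarith [h.lt_quarter], hlt.le⟩
    rw [eq_zero_of_abs_le_of_hasDerivAt hfΦ hextremal (hf ξ), abs_zero]
    exact abs_nonneg _

lemma apply_sub_le_primitive {s : ℝ} (hS : StaysAbove f' φ σ ρ) (h : QuarterWave φ L σ ρ)
    (H : QuarterWave Φ L 0 (L - σ)) (hΦ : ∀ x, HasDerivAt Φ (φ (x + L)) x)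
    (hf : ∀ x, HasDerivAt f (f' x) x) (hfΦ : ∀ x, |f x| ≤ Φ L) (hfφ : ∀ x, f' x ≤ φ L)
    (hs : 0 ≤ s) (hσ : -(L - σ) ≤ η - s) (hη : η ≤ L - σ) (hle : Φ η ≤ f ξ) :
    Φ (η - s) ≤ f (ξ - s) := by
  rcases hσ.eq_or_lt with hend | hlt
  · rw [← hend, H.apply_neg_eq ⟨le_rfl, sub_le_self _ h.zero_le⟩]
    exact (abs_le.1 (hfΦ _)).1
  · exact apply_sub_le_of_forall_crossing hΦ hf (fun x hx => h.apply_add_quarter_pos hx)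
      (fun ξ η hη heq => hS.deriv_le h H hΦ hf hfΦ hfφ (Ioo_subset_Icc_self hη) heq)
      hs hlt hη hle

lemma primitive (hS : StaysAbove f' φ σ ρ) (hS' : StaysAbove (fun x => -f' x) φ σ ρ)
    (h : QuarterWave φ L σ ρ) (H : QuarterWave Φ L 0 (L - σ))
    (hΦ : ∀ x, HasDerivAt Φ (φ (x + L)) x) (hf : ∀ x, HasDerivAt f (f' x) x)
    (hfΦ : ∀ x, |f x| ≤ Φ L) (hfφ : ∀ x, |f' x| ≤ φ L) :
    StaysAbove f Φ (-(L - σ)) (L - σ) := fun ξ η s hs hη hle => by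
  rcases le_total 0 s with hs0 | hs0
  · rw [abs_of_nonneg hs0] at hs ⊢
    exact hS.apply_sub_le_primitive h H hΦ hf hfΦ (fun x => (abs_le.1 (hfφ x)).2) hs0 hs hη hle
  · rw [abs_of_nonpos hs0] at hs ⊢
    have hrefl := hS'.comp_neg.apply_sub_le_primitive (ξ := -ξ) h H hΦ (hasDerivAt_comp_neg hf)
      (fun x => hfΦ _) (fun x => neg_le.1 (abs_le.1 (hfφ _)).1) (neg_nonneg.2 hs0) hs hη
      (by rwa [neg_neg])
    rwa [show -(-ξ - -s) = ξ - s by ring] at hrefl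

lemma primitive_top_le (hS : StaysAbove f' φ σ L) (hS' : StaysAbove (fun x => -f' x) φ σ L)
    (h : QuarterWave φ L σ L) (H : QuarterWave Φ L 0 (L - σ))
    (hΦ : ∀ x, HasDerivAt Φ (φ (x + L)) x) (hf : ∀ x, HasDerivAt f (f' x) x)
    (hB : ∀ x, |f x| ≤ B) (hsup : ∀ v < φ L, ∃ ξ, v < |f' ξ|) : Φ L ≤ B := by
  have hbefore : ∀ e ∈ Ioo σ L, Φ (e - L) - Φ (σ - L) ≤ B := fun e he => by
    have he' : e ∈ Icc σ L := Ioo_subset_Icc_self he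
    obtain ⟨ξ, hξ⟩ := hsup (φ e) (h.strictMonoOn he' ⟨h.lt.le, le_rfl⟩ he.2)
    rcases lt_abs.1 hξ with hpos | hneg
    · exact hS.sub_le_of_abs_le hΦ hf hB he' hpos.le
    · exact hS'.sub_le_of_abs_le hΦ (fun x => (hf x).neg)
        (fun x => (abs_neg (f x)).trans_le (hB x)) he' hneg.le
  have hlim : Tendsto (fun e => Φ (e - L) - Φ (σ - L)) (𝓝[<] L) (𝓝 (Φ L)) := by
    have hcont : Continuous fun e => Φ (e - L) - Φ (σ - L) :=
      (H.continuous.comp (continuous_id.sub continuous_const)).sub continuous_const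
    have hval : Φ (L - L) - Φ (σ - L) = Φ L := by
      rw [sub_self, H.odd.map_zero, ← neg_sub L σ,
        H.apply_neg_eq ⟨le_rfl, sub_le_self _ h.zero_le⟩, zero_sub, neg_neg]
    exact hval ▸ (hcont.tendsto L).mono_left nhdsWithin_le_nhds
  refine le_of_tendsto hlim ?_
  filter_upwards [Ioo_mem_nhdsLT h.lt] with e he using hbefore e he

end StaysAbove

namespace ScaledStaysAbove

variable {f f' φ Φ : ℝ → ℝ} {L σ ρ : ℝ}

/-- Otherwise scale `f'` down to the amplitude of `φ`: then `f` is scaled below the amplitude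
of `Φ`, contrary to `StaysAbove.primitive_top_le`. -/
lemma abs_deriv_le_top (hS : ScaledStaysAbove f' φ L σ L) (h : QuarterWave φ L σ L)
    (H : QuarterWave Φ L 0 (L - σ)) (hΦ : ∀ x, HasDerivAt Φ (φ (x + L)) x)
    (hf : ∀ x, HasDerivAt f (f' x) x) (hbdd : BddAbove (range fun x => |f' x|))
    (hfΦ : ∀ x, |f x| ≤ Φ L) (x : ℝ) : |f' x| ≤ φ L := by
  set m := ⨆ x, |f' x|
  have hle : ∀ x, |f' x| ≤ m := le_ciSup hbdd
  by_contra! hlt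
  have hm : φ L < m := hlt.trans_le (hle x)
  have hm0 : 0 < m := h.top_pos.trans hm
  set κ := φ L / m
  have hκ0 : 0 < κ := div_pos h.top_pos hm0
  have hκ1 : κ < 1 := (div_lt_one hm0).2 hm
  have habs : ∀ u, |κ * u| = κ * |u| := fun u => by rw [abs_mul, abs_of_pos hκ0]
  have hscaled : ∀ x, |κ * f' x| ≤ φ L := fun x => by
    rw [habs, ← div_mul_cancel₀ (φ L) hm0.ne']
    exact mul_le_mul_of_nonneg_left (hle x) hκ0.le
  have hκS := hS.const_mul (by rw [abs_of_pos hκ0]; exact hκ1.le)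
  have htop : Φ L ≤ κ * Φ L :=
    (hκS.staysAbove hscaled).primitive_top_le (hκS.staysAbove_neg hscaled) h H hΦ
      (fun x => (hf x).const_mul κ)
      (fun x => (habs _).trans_le (mul_le_mul_of_nonneg_left (hfΦ x) hκ0.le)) fun v hv => by
        have hv' : v / κ < m := (div_lt_comm₀ hκ0 hm0).2 (div_lt_div_of_pos_right hv hm0)
        obtain ⟨ξ, hξ⟩ := exists_lt_of_lt_ciSup hv'
        exact ⟨ξ, by rwa [habs, ← div_lt_iff₀' hκ0]⟩
  exact htop.not_gt (mul_lt_of_lt_one_left H.top_pos hκ1)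

lemma abs_deriv_le_top_of_eq_or (hS : ScaledStaysAbove f' φ L σ ρ) (h : QuarterWave φ L σ ρ)
    (H : QuarterWave Φ L 0 (L - σ)) (hΦ : ∀ x, HasDerivAt Φ (φ (x + L)) x)
    (hf : ∀ x, HasDerivAt f (f' x) x) (hbdd : BddAbove (range fun x => |f' x|))
    (hfφ : ρ = L ∨ ∀ x, |f' x| ≤ φ L) (hfΦ : ∀ x, |f x| ≤ Φ L) (x : ℝ) : |f' x| ≤ φ L := by
  rcases hfφ with rfl | hfφ
  · exact hS.abs_deriv_le_top h H hΦ hf hbdd hfΦ x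
  · exact hfφ x

lemma primitive (hS : ScaledStaysAbove f' φ L σ ρ) (h : QuarterWave φ L σ ρ)
    (H : QuarterWave Φ L 0 (L - σ)) (hΦ : ∀ x, HasDerivAt Φ (φ (x + L)) x)
    (hf : ∀ x, HasDerivAt f (f' x) x) (hbdd : BddAbove (range fun x => |f' x|))
    (hfφ : ρ = L ∨ ∀ x, |f' x| ≤ φ L) :
    ScaledStaysAbove f Φ L (-(L - σ)) (L - σ) := fun κ hκ hfΦ => by
  have hκS := hS.const_mul hκ
  have hκf : ∀ x, HasDerivAt (fun x => κ * f x) (κ * f' x) x := fun x => (hf x).const_mul κ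
  have hκbdd : BddAbove (range fun x => |κ * f' x|) := by
    obtain ⟨C, hC⟩ := hbdd
    exact ⟨C, forall_mem_range.2 fun x =>
      abs_mul_le_of_abs_le_one hκ (hC (mem_range_self x))⟩
  have hκφ := hκS.abs_deriv_le_top_of_eq_or h H hΦ hκf hκbdd
    (hfφ.imp_right fun hφ x => abs_mul_le_of_abs_le_one hκ (hφ x)) hfΦ
  exact (hκS.staysAbove hκφ).primitive (hκS.staysAbove_neg hκφ) h H hΦ hκf hfΦ hκφ

lemma abs_deriv_le {ξ η : ℝ} (hS : ScaledStaysAbove f' φ L σ ρ) (h : QuarterWave φ L σ ρ)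
    (H : QuarterWave Φ L 0 (L - σ)) (hΦ : ∀ x, HasDerivAt Φ (φ (x + L)) x)
    (hf : ∀ x, HasDerivAt f (f' x) x) (hbdd : BddAbove (range fun x => |f' x|))
    (hfφ : ρ = L ∨ ∀ x, |f' x| ≤ φ L) (hfΦ : ∀ x, |f x| ≤ Φ L) (heq : f ξ = Φ η) :
    |f' ξ| ≤ |φ (η + L)| := by
  have hpeak := hS.abs_deriv_le_top_of_eq_or h H hΦ hf hbdd hfφ hfΦ
  exact (hS.staysAbove hpeak).abs_deriv_le (hS.staysAbove_neg hpeak) h H hΦ hf hfΦ hpeak heq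

end ScaledStaysAbove

/-! ### Symmetries of primitives -/

section Primitive

variable {g G : ℝ → ℝ} {m L P : ℝ}

lemma antiperiodic_of_integral_eq_zero (hg : g.Antiperiodic P) (hGc : Continuous G)
    (hG : ∀ x y, ∫ t in x..y, g t = G y - G x) (hP : P ≠ 0) (hmean : ∫ t in 0..2 * P, G t = 0) :
    G.Antiperiodic P := by
  have hsum : ∀ t, G (t + P) = G P + G 0 - G t := fun t => by
    have hshift : ∫ u in 0..t, g (u + P) = G (t + P) - G P := by
      rw [intervalIntegral.integral_comp_add_right, hG, zero_add]
    simp only [hg _] at hshift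
    rw [intervalIntegral.integral_neg, hG] at hshift
    linarith
  have hsecond : ∫ t in P..2 * P, G t = P * (G P + G 0) - ∫ t in 0..P, G t := by
    have hshift := intervalIntegral.integral_comp_add_right G P (a := 0) (b := P)
    simp only [hsum] at hshift
    rw [intervalIntegral.integral_sub (by simp) (hGc.intervalIntegrable _ _),
      intervalIntegral.integral_const, smul_eq_mul, sub_zero, zero_add, ← two_mul] at hshift
    exact hshift.symm
  have hconst : G P + G 0 = 0 := by
    rw [← intervalIntegral.integral_add_adjacent_intervals (hGc.intervalIntegrable 0 P)
      (hGc.intervalIntegrable P (2 * P)), hsecond, add_sub_cancel] at hmean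
    exact (mul_eq_zero.1 hmean).resolve_left hP
  intro t
  rw [hsum, hconst, zero_sub]

lemma apply_sub_eq_neg_apply_add_of_primitive (hg : ∀ u, g (m - u) = g (m + u))
    (hG : ∀ x y, ∫ t in x..y, g t = G y - G x) (hanti : G.Antiperiodic (2 * L)) (u : ℝ) :
    G (m - u) = -G (m + u) := by
  have hreflect : ∀ u, G (m - u) = 2 * G m - G (m + u) := fun u => by
    have hright := intervalIntegral.integral_comp_add_left g m (a := 0) (b := u)
    have hleft := intervalIntegral.integral_comp_sub_left g m (a := 0) (b := u)
    simp only [hg] at hleft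
    rw [hright, hG, hG] at hleft
    simp only [add_zero, sub_zero] at hleft
    linarith
  have hcentre : G m = 0 := by
    have hanti' := hanti (m - L)
    rw [show m - L + 2 * L = m + L by ring] at hanti'
    linarith [hreflect L]
  rw [hreflect, hcentre, mul_zero, zero_sub]

lemma apply_add_sub_eq_of_antiperiodic (hg : ∀ u, g (m - u) = -g (m + u))
    (hanti : g.Antiperiodic (2 * L)) (u : ℝ) : g (m + L - u) = g (m + L + u) := by
  rw [show m + L - u = m - (L + u) + 2 * L by ring, hanti, hg, neg_neg, add_assoc]

end Primitive

/-! ### The Rodov splines -/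

section Psi

variable {α a b c : ℝ}

lemma psiHalf_symm (t : ℝ) : psiHalf a b c (2 * (a + b + c) - t) = psiHalf a b c t := by
  unfold psiHalf
  rw [sub_sub_cancel]
  split_ifs with hle hge hge
  · rw [show t = a + b + c by linarith, two_mul, add_sub_cancel_right]
  · rfl
  · rfl
  · linarith

lemma psiHalf_zero (ha : 0 ≤ a) (hL : 0 < a + b + c) : psiHalf a b c 0 = 0 := by
  rw [psiHalf, if_pos hL.le, psiBase, if_pos ha]

lemma psiHalf_two_mul (ha : 0 ≤ a) (hL : 0 < a + b + c) :
    psiHalf a b c (2 * (a + b + c)) = 0 := by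
  rw [← psiHalf_symm, sub_self, psiHalf_zero ha hL]

lemma psiZero_periodic (hL : 0 < a + b + c) : (psiZero a b c).Periodic (4 * (a + b + c)) :=
  fun t => by
    have hfloor : ⌊(t + 4 * (a + b + c)) / (4 * (a + b + c))⌋ = ⌊t / (4 * (a + b + c))⌋ + 1 := by
      rw [add_div, div_self (by positivity), Int.floor_add_one]
    unfold psiZero
    rw [hfloor, Int.cast_add, Int.cast_one, mul_add_one, add_sub_add_right_eq_sub]

lemma floor_div_eq_zero {t p : ℝ} (ht : t ∈ Ico 0 p) : ⌊t / p⌋ = 0 := by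
  have hp : 0 < p := ht.1.trans_lt ht.2
  exact Int.floor_eq_zero_iff.2 ⟨div_nonneg ht.1 hp.le, (div_lt_one hp).2 ht.2⟩

lemma psiZero_eq_psiHalf (hL : 0 < a + b + c) {t : ℝ} (ht : t ∈ Icc 0 (2 * (a + b + c))) :
    psiZero a b c t = psiHalf a b c t := by
  have hfloor : ⌊t / (4 * (a + b + c))⌋ = 0 := floor_div_eq_zero ⟨ht.1, by linarith [ht.2]⟩
  rw [psiZero, hfloor, Int.cast_zero, mul_zero, sub_zero, if_pos ht.2]

lemma psiZero_eq_neg_psiHalf (ha : 0 ≤ a) (hL : 0 < a + b + c) {t : ℝ}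
    (ht : t ∈ Icc (2 * (a + b + c)) (4 * (a + b + c))) :
    psiZero a b c t = -psiHalf a b c (4 * (a + b + c) - t) := by
  rcases ht.1.eq_or_lt with rfl | hlow
  · rw [psiZero_eq_psiHalf hL ⟨by positivity, le_rfl⟩, ← sub_mul, psiHalf_two_mul ha hL,
      show (4 : ℝ) - 2 = 2 by norm_num, psiHalf_two_mul ha hL, neg_zero]
  rcases ht.2.eq_or_lt with rfl | hup
  · rw [(psiZero_periodic hL).eq, psiZero_eq_psiHalf hL ⟨le_rfl, by positivity⟩, sub_self,
      psiHalf_zero ha hL, neg_zero]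
  have hfloor : ⌊t / (4 * (a + b + c))⌋ = 0 := floor_div_eq_zero ⟨by linarith, hup⟩
  rw [psiZero, hfloor, Int.cast_zero, mul_zero, sub_zero, if_neg hlow.not_ge]

lemma psiZero_antiperiodic (ha : 0 ≤ a) (hL : 0 < a + b + c) :
    (psiZero a b c).Antiperiodic (2 * (a + b + c)) := fun t => by
  have hper : Function.Periodic (fun t => psiZero a b c (t + 2 * (a + b + c)) + psiZero a b c t)
      (4 * (a + b + c)) := fun t => by
    simp only [add_right_comm t, psiZero_periodic hL _]
  obtain ⟨u, hu, htu⟩ := hper.exists_mem_Ico₀ (by positivity) t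
  refine eq_neg_of_add_eq_zero_left (htu.trans ?_)
  rcases le_total u (2 * (a + b + c)) with hle | hle
  · rw [psiZero_eq_neg_psiHalf ha hL ⟨by linarith [hu.1], by linarith⟩,
      psiZero_eq_psiHalf hL ⟨hu.1, hle⟩,
      show 4 * (a + b + c) - (u + 2 * (a + b + c)) = 2 * (a + b + c) - u by ring, psiHalf_symm,
      neg_add_cancel]
  · rw [show u + 2 * (a + b + c) = u - 2 * (a + b + c) + 4 * (a + b + c) by ring,
      psiZero_periodic hL, psiZero_eq_psiHalf hL ⟨by linarith, by linarith [hu.2]⟩,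
      psiZero_eq_neg_psiHalf ha hL ⟨hle, hu.2.le⟩, ← psiHalf_symm (4 * (a + b + c) - u),
      show 2 * (a + b + c) - (4 * (a + b + c) - u) = u - 2 * (a + b + c) by ring, add_neg_cancel]

lemma psiZero_odd (ha : 0 ≤ a) (hL : 0 < a + b + c) : (psiZero a b c).Odd := fun t => by
  have hper : Function.Periodic (fun t => psiZero a b c (-t) + psiZero a b c t)
      (4 * (a + b + c)) := fun t => by
    simp only [neg_add, ← sub_eq_add_neg, (psiZero_periodic hL).sub_eq, psiZero_periodic hL t]
  obtain ⟨u, hu, htu⟩ := hper.exists_mem_Ico₀ (by positivity) t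
  refine eq_neg_of_add_eq_zero_left (htu.trans ?_)
  rw [← (psiZero_periodic hL).sub_eq']
  rcases le_total u (2 * (a + b + c)) with hle | hle
  · rw [psiZero_eq_neg_psiHalf ha hL ⟨by linarith, by linarith [hu.1]⟩,
      psiZero_eq_psiHalf hL ⟨hu.1, hle⟩, sub_sub_cancel, neg_add_cancel]
  · rw [psiZero_eq_neg_psiHalf ha hL ⟨hle, hu.2.le⟩,
      psiZero_eq_psiHalf hL ⟨by linarith [hu.2], by linarith⟩, add_neg_cancel]

lemma psiZero_quarter_add (hL : 0 < a + b + c) {x : ℝ} (hx : x ∈ Icc 0 (a + b + c)) :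
    psiZero a b c (a + b + c + x) = psiBase a b (a + b + c - x) := by
  rw [psiZero_eq_psiHalf hL ⟨by linarith [hx.1], by linarith [hx.2]⟩, ← psiHalf_symm,
    show 2 * (a + b + c) - (a + b + c + x) = a + b + c - x by ring, psiHalf,
    if_pos (sub_le_self _ hx.1)]

lemma abs_psiZero_le_one (t : ℝ) : |psiZero a b c t| ≤ 1 := by
  unfold psiZero psiHalf psiBase
  split_ifs <;> simp

lemma measurable_psiZero : Measurable (psiZero a b c) := by
  have hbase : Measurable (psiBase a b) :=
    measurable_const.ite measurableSet_Iic (measurable_const.ite measurableSet_Iic measurable_const)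
  have hhalf : Measurable (psiHalf a b c) :=
    hbase.ite measurableSet_Iic (hbase.comp (measurable_const.sub measurable_id))
  have hfract : Measurable fun t : ℝ => t - 4 * (a + b + c) * (⌊t / (4 * (a + b + c))⌋ : ℝ) :=
    measurable_id.sub (measurable_const.mul
      (measurable_from_top.comp (measurable_id.div_const _).floor))
  exact (hhalf.comp hfract).ite (measurableSet_le hfract measurable_const)
    (hhalf.comp (measurable_const.sub hfract)).neg

lemma intervalIntegrable_psiZero (x y : ℝ) : IntervalIntegrable (psiZero a b c) volume x y :=
  (intervalIntegrable_const (c := (1 : ℝ))).mono_fun measurable_psiZero.aestronglyMeasurable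
    (Eventually.of_forall fun t => by simpa using abs_psiZero_le_one t)

lemma continuous_psi_succ_of_intervalIntegrable (s : ℕ)
    (hint : ∀ x y, IntervalIntegrable (psi s a b c) volume x y) :
    Continuous (psi (s + 1) a b c) :=
  (intervalIntegral.continuous_primitive hint 0).sub continuous_const

lemma intervalIntegrable_psi (s : ℕ) (x y : ℝ) : IntervalIntegrable (psi s a b c) volume x y := by
  induction s generalizing x y with
  | zero => exact intervalIntegrable_psiZero x y
  | succ s ih => exact (continuous_psi_succ_of_intervalIntegrable s ih).intervalIntegrable x y

lemma continuous_psi_succ (s : ℕ) : Continuous (psi (s + 1) a b c) :=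
  continuous_psi_succ_of_intervalIntegrable s (intervalIntegrable_psi s)

lemma integral_psi (s : ℕ) (x y : ℝ) :
    ∫ t in x..y, psi s a b c t = psi (s + 1) a b c y - psi (s + 1) a b c x := by
  rw [← intervalIntegral.integral_interval_sub_left (intervalIntegrable_psi s 0 y)
    (intervalIntegrable_psi s 0 x)]
  exact (sub_sub_sub_cancel_right _ _ _).symm

lemma hasDerivAt_psi (s : ℕ) (t : ℝ) : HasDerivAt (psi (s + 2) a b c) (psi (s + 1) a b c t) t :=
  ((continuous_psi_succ s).integral_hasStrictDerivAt 0 t).hasDerivAt.sub_const _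

lemma integral_psi_period (hL : 0 < a + b + c) (s : ℕ) :
    ∫ t in 0..4 * (a + b + c), psi (s + 1) a b c t = 0 := by
  have hprim := intervalIntegral.continuous_primitive (intervalIntegrable_psi (a := a) (b := b)
    (c := c) s) 0
  simp only [psi]
  rw [intervalIntegral.integral_sub (hprim.intervalIntegrable _ _) intervalIntegrable_const,
    intervalIntegral.integral_const, smul_eq_mul]
  field_simp
  ring

lemma psi_antiperiodic (ha : 0 ≤ a) (hL : 0 < a + b + c) (s : ℕ) :
    (psi s a b c).Antiperiodic (2 * (a + b + c)) := by
  induction s with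
  | zero => exact psiZero_antiperiodic ha hL
  | succ s ih =>
    refine antiperiodic_of_integral_eq_zero ih (continuous_psi_succ s) (integral_psi s)
      (by positivity) ?_
    rw [← mul_assoc, show (2 : ℝ) * 2 = 4 by norm_num, integral_psi_period hL]

lemma psi_sub_eq_neg_add (ha : 0 ≤ a) (hL : 0 < a + b + c) (s : ℕ) (u : ℝ) :
    psi s a b c (s * (a + b + c) - u) = -psi s a b c (s * (a + b + c) + u) := by
  induction s generalizing u with
  | zero => simpa [psi] using psiZero_odd ha hL u
  | succ s ih =>
    rw [Nat.cast_succ, add_one_mul]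
    exact apply_sub_eq_neg_apply_add_of_primitive
      (apply_add_sub_eq_of_antiperiodic ih (psi_antiperiodic ha hL s)) (integral_psi s)
      (psi_antiperiodic ha hL (s + 1)) u

/-- The spline `α ψ_s(a, b, c)` with the origin moved to its zero `s (a + b + c)`, so that it is
odd at every level `s` and increasing at the origin. -/
noncomputable def centredPsi (α a b c : ℝ) (s : ℕ) (x : ℝ) : ℝ :=
  α * psi s a b c (s * (a + b + c) + x)

lemma centredPsi_odd (α : ℝ) (ha : 0 ≤ a) (hL : 0 < a + b + c) (s : ℕ) :
    (centredPsi α a b c s).Odd := fun x => by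
  rw [centredPsi, ← sub_eq_add_neg, psi_sub_eq_neg_add ha hL, mul_neg, centredPsi]

lemma centredPsi_symm (α : ℝ) (ha : 0 ≤ a) (hL : 0 < a + b + c) (s : ℕ) (x : ℝ) :
    centredPsi α a b c s (2 * (a + b + c) - x) = centredPsi α a b c s x := by
  rw [centredPsi, centredPsi, show (s : ℝ) * (a + b + c) + (2 * (a + b + c) - x) =
    s * (a + b + c) - x + 2 * (a + b + c) by ring, psi_antiperiodic ha hL,
    psi_sub_eq_neg_add ha hL, neg_neg]

lemma hasDerivAt_centredPsi (α : ℝ) (s : ℕ) (x : ℝ) :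
    HasDerivAt (centredPsi α a b c (s + 2)) (centredPsi α a b c (s + 1) (x + (a + b + c))) x := by
  refine (((hasDerivAt_psi s _).comp_const_add _ x).const_mul α).congr_deriv ?_
  rw [centredPsi]
  congr 2
  push_cast
  ring

lemma const_mul_psi_eq_centredPsi (α : ℝ) (s : ℕ) (t : ℝ) :
    α * psi s a b c t = centredPsi α a b c s (t - s * (a + b + c)) := by
  rw [centredPsi, add_sub_cancel]

lemma deriv_const_mul_psi_eq_centredPsi (α : ℝ) (s : ℕ) (t : ℝ) :
    deriv (fun t => α * psi (s + 2) a b c t) t =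
      centredPsi α a b c (s + 1) (t - (s + 2 : ℕ) * (a + b + c) + (a + b + c)) := by
  rw [((hasDerivAt_psi s t).const_mul α).deriv, const_mul_psi_eq_centredPsi]
  congr 1
  push_cast
  ring

lemma centredPsi_one_sub {v x y : ℝ} (hL : 0 < a + b + c) (hx : 0 ≤ x) (hxy : x ≤ y)
    (hy : y ≤ a + b + c) (hv : ∀ t ∈ Ioo x y, psiBase a b (a + b + c - t) = v) :
    centredPsi α a b c 1 y - centredPsi α a b c 1 x = α * (v * (y - x)) := by
  have hint : ∫ t in x..y, psi 0 a b c (a + b + c + t) = ∫ _ in x..y, v :=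
    intervalIntegral.integral_congr_Ioo_of_le hxy fun t ht =>
      (psiZero_quarter_add hL ⟨hx.trans ht.1.le, ht.2.le.trans hy⟩).trans (hv t ht)
  rw [intervalIntegral.integral_comp_add_left, integral_psi, intervalIntegral.integral_const,
    smul_eq_mul, mul_comm] at hint
  rw [centredPsi, centredPsi, ← mul_sub, Nat.cast_one, one_mul, ← hint]

lemma centredPsi_one_of_mem_Icc_zero (α : ℝ) (ha : 0 ≤ a) (hb : 0 < b) {x : ℝ} (hx : x ∈ Icc 0 c) :
    centredPsi α a b c 1 x = 0 := by
  have hL : 0 < a + b + c := by linarith [hx.1, hx.2]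
  have := centredPsi_one_sub (α := α) (v := 0) hL le_rfl hx.1 (by linarith [hx.2]) fun t ht => by
    rw [psiBase, if_neg (by linarith [ht.2, hx.2]), if_neg (by linarith [ht.2, hx.2])]
  rwa [(centredPsi_odd α ha hL 1).map_zero, sub_zero, zero_mul, mul_zero] at this

lemma centredPsi_one_of_mem_Icc_add (α : ℝ) (ha : 0 ≤ a) (hb : 0 < b) (hc : 0 ≤ c) {x : ℝ}
    (hx : x ∈ Icc c (c + b)) : centredPsi α a b c 1 x = α * (x - c) := by
  have hL : 0 < a + b + c := by linarith
  have := centredPsi_one_sub (α := α) (v := 1) hL hc hx.1 (by linarith [hx.2]) fun t ht => by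
    rw [psiBase, if_neg (by linarith [ht.2, hx.2]), if_pos (by linarith [ht.1])]
  rwa [centredPsi_one_of_mem_Icc_zero α ha hb ⟨hc, le_rfl⟩, sub_zero, one_mul] at this

lemma centredPsi_one_of_mem_Icc_quarter (α : ℝ) (ha : 0 ≤ a) (hb : 0 < b) (hc : 0 ≤ c) {x : ℝ}
    (hx : x ∈ Icc (c + b) (a + b + c)) : centredPsi α a b c 1 x = α * b := by
  have hL : 0 < a + b + c := by linarith
  have := centredPsi_one_sub (α := α) (v := 0) hL (by linarith) hx.1 hx.2 fun t ht => by
    rw [psiBase, if_pos (by linarith [ht.1])]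
  rwa [centredPsi_one_of_mem_Icc_add α ha hb hc ⟨by linarith, le_rfl⟩, zero_mul, mul_zero,
    sub_eq_zero, add_sub_cancel_left] at this

/-- Length of the interval `[0, plateau a c s]` on which `ψ_s(a, b, c)`, recentred at its zero,
vanishes; the top of `ψ_{s + 1}(a, b, c)` has the same half-length. -/
def plateau (a c : ℝ) : ℕ → ℝ
  | 0 => a
  | 1 => c
  | _ + 2 => 0

lemma quarterWave_centredPsi_one (hα : 0 < α) (ha : 0 ≤ a) (hb : 0 < b) (hc : 0 ≤ c) :
    QuarterWave (centredPsi α a b c 1) (a + b + c) c (a + b + c - a) where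
  zero_le := hc
  lt := by linarith
  le := sub_le_self _ ha
  odd := centredPsi_odd α ha (by positivity) 1
  symm := centredPsi_symm α ha (by positivity) 1
  eq_zero _ hx := centredPsi_one_of_mem_Icc_zero α ha hb hx
  eq_top x hx := by
    rw [centredPsi_one_of_mem_Icc_quarter α ha hb hc ⟨by linarith [hx.1], hx.2⟩,
      centredPsi_one_of_mem_Icc_quarter α ha hb hc ⟨by linarith, le_rfl⟩]
  strictMonoOn x hx y hy hxy := by
    rw [centredPsi_one_of_mem_Icc_add α ha hb hc ⟨hx.1, by linarith [hx.2]⟩,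
      centredPsi_one_of_mem_Icc_add α ha hb hc ⟨hy.1, by linarith [hy.2]⟩]
    exact mul_lt_mul_of_pos_left (by linarith) hα
  continuous :=
    continuous_const.mul ((continuous_psi_succ 0).comp (continuous_const.add continuous_id))

lemma quarterWave_centredPsi (hα : 0 < α) (ha : 0 ≤ a) (hb : 0 < b) (hc : 0 ≤ c) (s : ℕ) :
    QuarterWave (centredPsi α a b c (s + 1)) (a + b + c) (plateau a c (s + 1))
      (a + b + c - plateau a c s) := by
  induction s with
  | zero => exact quarterWave_centredPsi_one hα ha hb hc
  | succ s ih =>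
    exact ih.primitive (hasDerivAt_centredPsi α s) (centredPsi_odd α ha (by positivity) _)
      (centredPsi_symm α ha (by positivity) _)

lemma iteratedDeriv_const_mul_psi (α : ℝ) (m k : ℕ) :
    iteratedDeriv k (fun t => α * psi (m + 1 + k) a b c t) =
      fun t => α * psi (m + 1) a b c t := by
  induction k with
  | zero => exact iteratedDeriv_zero
  | succ k ih =>
    have hderiv : deriv (fun t => α * psi (m + 1 + (k + 1)) a b c t) =
        fun t => α * psi (m + 1 + k) a b c t := by
      ext t
      rw [show m + 1 + (k + 1) = m + k + 2 by ring, show m + 1 + k = m + k + 1 by ring]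
      exact ((hasDerivAt_psi (m + k) t).const_mul α).deriv
    rw [iteratedDeriv_succ', hderiv, ih]

lemma lipschitzWith_const_mul_psi_one (hα : 0 ≤ α) :
    LipschitzWith ⟨α, hα⟩ (fun t => α * psi 1 a b c t) := by
  refine LipschitzWith.of_dist_le_mul fun x y => ?_
  rw [Real.dist_eq, Real.dist_eq, ← mul_sub, abs_mul, abs_of_nonneg hα, ← integral_psi 0 y x]
  refine mul_le_mul_of_nonneg_left ?_ hα
  simpa using intervalIntegral.norm_integral_le_of_norm_le_const (a := y) (b := x)
    (f := psi 0 a b c) fun t _ => abs_psiZero_le_one t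

lemma M_const_mul_psi_le (hα : 0 < α) (ha : 0 ≤ a) (hb : 0 < b) (hc : 0 ≤ c) (m k : ℕ) :
    M k (fun t => α * psi (m + 1 + k) a b c t) ≤ centredPsi α a b c (m + 1) (a + b + c) := by
  refine ciSup_le fun t => ?_
  rw [iteratedDeriv_const_mul_psi]
  beta_reduce
  rw [const_mul_psi_eq_centredPsi]
  exact (quarterWave_centredPsi hα ha hb hc m).abs_le_top _

lemma M_succ_const_mul_psi_le (hα : 0 ≤ α) (k : ℕ) :
    M (k + 1) (fun t => α * psi (k + 1) a b c t) ≤ α := by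
  refine ciSup_le fun t => ?_
  rw [iteratedDeriv_succ, show k + 1 = 0 + 1 + k by ring, iteratedDeriv_const_mul_psi]
  exact norm_deriv_le_of_lipschitz (lipschitzWith_const_mul_psi_one hα)

end Psi

/-! ### Boundedness of the intermediate derivatives -/

lemma exists_abs_iteratedDeriv_le {f : ℝ → ℝ} {C : ℝ} {n : ℕ} (hf : ContDiff ℝ n f)
    (hC : ∀ x, |f x| ≤ C) (t : ℝ) :
    ∃ θ ∈ Icc t (t + n), |iteratedDeriv n f θ| ≤ 2 ^ n * C := by
  induction n generalizing f C with
  | zero => exact ⟨t, by simp, by simpa using hC t⟩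
  | succ n ih =>
    have hfn : ContDiff ℝ n f := hf.of_le (by exact_mod_cast n.le_succ)
    have hshift : ContDiff ℝ n fun x => f (x + 1) := hfn.comp (contDiff_id.add contDiff_const)
    obtain ⟨θ, hθ, hdiff⟩ := ih (hshift.sub hfn) (C := 2 * C) fun x => by
      linarith [abs_sub (f (x + 1)) (f x), hC (x + 1), hC x]
    rw [iteratedDeriv_fun_sub hshift.contDiffAt hfn.contDiffAt,
      iteratedDeriv_comp_add_const] at hdiff
    have hd : Differentiable ℝ (iteratedDeriv n f) :=
      hf.differentiable_iteratedDeriv n (by exact_mod_cast n.lt_succ_self)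
    obtain ⟨y, hy, hslope⟩ := exists_deriv_eq_slope (iteratedDeriv n f) (lt_add_one θ)
      hd.continuous.continuousOn hd.differentiableOn
    refine ⟨y, ⟨hθ.1.trans hy.1.le, ?_⟩, ?_⟩
    · push_cast
      linarith [hy.2, hθ.2]
    · rw [iteratedDeriv_succ, hslope, add_sub_cancel_left, div_one, pow_succ, mul_assoc]
      exact hdiff

lemma exists_forall_abs_iteratedDeriv_le_of_lipschitzWith {f : ℝ → ℝ} {n i : ℕ} {K : NNReal}
    (hf : ContDiff ℝ n f) (hbdd : ∃ C, ∀ x, |f x| ≤ C) (hK : LipschitzWith K (iteratedDeriv n f))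
    (hi : i ≤ n) : ∃ B, ∀ x, |iteratedDeriv i f x| ≤ B := by
  obtain ⟨C, hC⟩ := hbdd
  induction n generalizing K with
  | zero => exact ⟨C, by simpa [Nat.le_zero.1 hi] using hC⟩
  | succ n ih =>
    have htop : ∀ x, |iteratedDeriv (n + 1) f x| ≤ 2 ^ (n + 1) * C + K * (n + 1 : ℕ) := fun x => by
      obtain ⟨θ, hθ, hCθ⟩ := exists_abs_iteratedDeriv_le hf hC x
      have hdist : |x - θ| ≤ (n + 1 : ℕ) := abs_le.2 ⟨by linarith [hθ.2], by linarith [hθ.1]⟩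
      have hlip := hK.dist_le_mul x θ
      rw [Real.dist_eq, Real.dist_eq] at hlip
      linarith [mul_le_mul_of_nonneg_left hdist K.coe_nonneg,
        abs_sub_abs_le_abs_sub (iteratedDeriv (n + 1) f x) (iteratedDeriv (n + 1) f θ)]
    rcases hi.eq_or_lt with rfl | hi
    · exact ⟨_, htop⟩
    · have hd : Differentiable ℝ (iteratedDeriv n f) :=
        hf.differentiable_iteratedDeriv n (by exact_mod_cast n.lt_succ_self)
      refine ih (hf.of_le (by exact_mod_cast n.le_succ))
        (lipschitzWith_of_nnnorm_deriv_le (C := (2 ^ (n + 1) * C + K * (n + 1 : ℕ)).toNNReal) hd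
          fun x => ?_) (Nat.lt_succ_iff.1 hi)
      rw [← iteratedDeriv_succ]
      exact NNReal.coe_le_coe.1 ((htop x).trans (Real.le_coe_toNNReal _))

lemma abs_sub_le_mul_of_abs_deriv_le {h : ℝ → ℝ} {K : NNReal} {m : ℝ} (hK : LipschitzWith K h)
    (hm : ∀ x, |deriv h x| ≤ m) (x y : ℝ) : |h x - h y| ≤ m * |x - y| := by
  rw [← (hK.lipschitzOnWith (s := uIcc y x)).absolutelyContinuousOnInterval.integral_deriv_eq_sub]
  exact intervalIntegral.norm_integral_le_of_norm_le_const (f := deriv h) fun t _ => hm t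

namespace MemL

variable {f : ℝ → ℝ} {n i : ℕ}

lemma hasDerivAt_iteratedDeriv (hf : MemL (n + 1) f) (hi : i < n) (x : ℝ) :
    HasDerivAt (iteratedDeriv i f) (iteratedDeriv (i + 1) f x) x := by
  rw [iteratedDeriv_succ]
  exact (hf.2.2.1.differentiable_iteratedDeriv i (by exact_mod_cast hi) x).hasDerivAt

lemma bddAbove_range_abs_iteratedDeriv (hf : MemL (n + 1) f) (hi : i ≤ n + 1) :
    BddAbove (range fun x => |iteratedDeriv i f x|) := by
  obtain ⟨-, hbdd, hcd, K, hK⟩ := hf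
  rcases hi.eq_or_lt with rfl | hi
  · refine ⟨K, forall_mem_range.2 fun x => ?_⟩
    rw [iteratedDeriv_succ]
    exact norm_deriv_le_of_lipschitz hK
  · obtain ⟨B, hB⟩ := exists_forall_abs_iteratedDeriv_le_of_lipschitzWith hcd hbdd hK
      (Nat.lt_succ_iff.1 hi)
    exact ⟨B, forall_mem_range.2 hB⟩

lemma abs_iteratedDeriv_le_M (hf : MemL (n + 1) f) (hi : i ≤ n + 1) (x : ℝ) :
    |iteratedDeriv i f x| ≤ M i f :=
  le_ciSup (hf.bddAbove_range_abs_iteratedDeriv hi) x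

lemma abs_iteratedDeriv_sub_le (hf : MemL (n + 1) f) (x y : ℝ) :
    |iteratedDeriv n f x - iteratedDeriv n f y| ≤ M (n + 1) f * |x - y| := by
  obtain ⟨K, hK⟩ := hf.2.2.2
  refine abs_sub_le_mul_of_abs_deriv_le hK (fun t => ?_) x y
  rw [Nat.add_sub_cancel, ← iteratedDeriv_succ]
  exact hf.abs_iteratedDeriv_le_M le_rfl t

end MemL

/-! ### Comparison with Rodov splines -/

section Comparison

variable {α a b c : ℝ} {f ψ : ℝ → ℝ} {n : ℕ} {ξ η : ℝ}

lemma staysAbove_centredPsi_one (ha : 0 ≤ a) (hb : 0 < b) (hc : 0 ≤ c) {h : ℝ → ℝ}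
    (hh : ∀ x y, |h x - h y| ≤ α * |x - y|) :
    StaysAbove h (centredPsi α a b c 1) c (a + b + c - a) := fun ξ η s hs hη hle => by
  have hs0 : 0 ≤ |s| := abs_nonneg s
  rw [centredPsi_one_of_mem_Icc_add α ha hb hc ⟨by linarith, by linarith⟩] at hle
  rw [centredPsi_one_of_mem_Icc_add α ha hb hc ⟨hs, by linarith⟩]
  have hlip := hh ξ (ξ - s)
  rw [sub_sub_cancel] at hlip
  linarith [(abs_le.1 hlip).2]

lemma scaledStaysAbove_centredPsi_one (ha : 0 ≤ a) (hb : 0 < b) (hc : 0 ≤ c) {h : ℝ → ℝ}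
    (hh : ∀ x y, |h x - h y| ≤ α * |x - y|) (L : ℝ) :
    ScaledStaysAbove h (centredPsi α a b c 1) L c (a + b + c - a) := fun κ hκ _ =>
  staysAbove_centredPsi_one ha hb hc fun x y => by
    rw [← mul_sub]
    exact abs_mul_le_of_abs_le_one hκ (hh x y)

lemma MemL.abs_iteratedDeriv_le_centredPsi (hf : MemL (n + 1) f) (hα : 0 < α) (ha : 0 ≤ a)
    (hb : 0 < b) (hc : 0 ≤ c) {s i : ℕ} (hi : i + s = n)
    (hM : M i f ≤ M i fun t => α * psi (n + 1) a b c t) (x : ℝ) :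
    |iteratedDeriv i f x| ≤ centredPsi α a b c (s + 1) (a + b + c) := by
  have hψ := M_const_mul_psi_le hα ha hb hc s i
  rw [show s + 1 + i = n + 1 by omega] at hψ
  exact (hf.abs_iteratedDeriv_le_M (by omega) x).trans (hM.trans hψ)

lemma MemL.plateau_eq_zero_or_abs_iteratedDeriv_le_centredPsi (hf : MemL (n + 2) f) (hα : 0 < α)
    (ha : 0 ≤ a) (hb : 0 < b) (hc : 0 ≤ c)
    (hMa : a = 0 ∨ M (n + 1) f ≤ M (n + 1) fun t => α * psi (n + 2) a b c t)
    (hMc : c = 0 ∨ M n f ≤ M n fun t => α * psi (n + 2) a b c t) :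
    ∀ s i, i + s = n + 1 → plateau a c s = 0 ∨
      ∀ x, |iteratedDeriv i f x| ≤ centredPsi α a b c (s + 1) (a + b + c)
  | 0, i, hi => hMa.imp_right fun hM => hf.abs_iteratedDeriv_le_centredPsi hα ha hb hc hi <| by
      rwa [show i = n + 1 from hi]
  | 1, i, hi => hMc.imp_right fun hM => hf.abs_iteratedDeriv_le_centredPsi hα ha hb hc hi <| by
      rwa [show i = n from Nat.succ_injective hi]
  | _ + 2, _, _ => Or.inl rfl

lemma MemL.scaledStaysAbove_centredPsi (hf : MemL (n + 1) f) (hα : 0 < α) (ha : 0 ≤ a)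
    (hb : 0 < b) (hc : 0 ≤ c) (hr : M (n + 1) f ≤ α)
    (hpeak : ∀ s i, i + s = n →
      plateau a c s = 0 ∨ ∀ x, |iteratedDeriv i f x| ≤ centredPsi α a b c (s + 1) (a + b + c))
    {s i : ℕ} (hi : i + s = n) :
    ScaledStaysAbove (iteratedDeriv i f) (centredPsi α a b c (s + 1)) (a + b + c)
      (plateau a c (s + 1)) (a + b + c - plateau a c s) := by
  induction s generalizing i with
  | zero =>
    obtain rfl : i = n := hi
    exact scaledStaysAbove_centredPsi_one ha hb hc (fun x y =>
      (hf.abs_iteratedDeriv_sub_le x y).trans (by gcongr)) _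
  | succ s ih =>
    have hwave := quarterWave_centredPsi hα ha hb hc s
    have hprim := (ih (i := i + 1) (by omega)).primitive hwave
      (quarterWave_centredPsi hα ha hb hc (s + 1)) (hasDerivAt_centredPsi α s)
      (hf.hasDerivAt_iteratedDeriv (by omega))
      (hf.bddAbove_range_abs_iteratedDeriv (by omega))
      ((hpeak s (i + 1) (by omega)).imp_left fun h => by rw [h, sub_zero])
    exact hprim.mono (neg_nonpos.2 (sub_nonneg.2 hwave.lt_quarter.le)) le_rfl

theorem stmt15_general {r : ℕ} (hr : 2 ≤ r) (hα : 0 < α) (ha : 0 ≤ a) (hb : 0 < b) (hc : 0 ≤ c)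
    (hf : MemL r f) (hψ : ψ = fun t => α * psi r a b c t) (hM₀ : M 0 f ≤ M 0 ψ)
    (hMc : c = 0 ∨ M (r - 2) f ≤ M (r - 2) ψ) (hMa : a = 0 ∨ M (r - 1) f ≤ M (r - 1) ψ)
    (hMr : M r f ≤ M r ψ) (heq : f ξ = ψ η) : |deriv f ξ| ≤ |deriv ψ η| := by
  obtain ⟨n, rfl⟩ := Nat.exists_eq_add_of_le' hr
  subst hψ
  have hpeak := hf.plateau_eq_zero_or_abs_iteratedDeriv_le_centredPsi hα ha hb hc hMa hMc
  have hf' : ∀ x, HasDerivAt f (iteratedDeriv 1 f x) x := by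
    simpa only [iteratedDeriv_zero] using hf.hasDerivAt_iteratedDeriv n.succ_pos
  have hfψ : ∀ x, |f x| ≤ centredPsi α a b c (n + 2) (a + b + c) := by
    simpa only [iteratedDeriv_zero] using
      hf.abs_iteratedDeriv_le_centredPsi hα ha hb hc (zero_add (n + 1)) hM₀
  have hS := hf.scaledStaysAbove_centredPsi hα ha hb hc
    (hMr.trans (M_succ_const_mul_psi_le hα.le (n + 1))) hpeak (Nat.add_comm 1 n)
  rw [deriv_const_mul_psi_eq_centredPsi, (hf' ξ).deriv]
  exact hS.abs_deriv_le (quarterWave_centredPsi hα ha hb hc n)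
    (quarterWave_centredPsi hα ha hb hc (n + 1)) (hasDerivAt_centredPsi α n) hf'
    (hf.bddAbove_range_abs_iteratedDeriv (by omega))
    ((hpeak n 1 (Nat.add_comm 1 n)).imp_left fun h => by rw [h, sub_zero]) hfψ
    (heq.trans (const_mul_psi_eq_centredPsi α (n + 2) η))

end Comparison

/-- **Comparison theorem for Rodov splines.** If `f ∈ L^r_{∞,∞}` and `ψ` is one of the
splines `α ψ_r(a,b,0)`, `α ψ_r(0,b,c)`, `α ψ_r(a,b,c)` dominating the corresponding
norms of `f`, then `f ξ = ψ η` implies `|f' ξ| ≤ |ψ' η|`. -/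
theorem stmt15 (r k : ℕ) (f ψ : ℝ → ℝ) (hf : MemL r f)
    (hcase :
      (∃ α a b : ℝ, 0 < α ∧ 0 < b ∧ 0 ≤ a ∧ 3 ≤ r ∧ 0 < k ∧ k < r - 1 ∧
        ψ = (fun t => α * psi r a b 0 t) ∧
        M 0 f ≤ M 0 ψ ∧ M (r - 1) f ≤ M (r - 1) ψ ∧ M r f ≤ M r ψ) ∨
      (∃ α b c : ℝ, 0 < α ∧ 0 < b ∧ 0 ≤ c ∧ 4 ≤ r ∧ 0 < k ∧ k < r - 2 ∧
        ψ = (fun t => α * psi r 0 b c t) ∧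
        M 0 f ≤ M 0 ψ ∧ M (r - 2) f ≤ M (r - 2) ψ ∧ M r f ≤ M r ψ) ∨
      (∃ α a b c : ℝ, 0 < α ∧ 0 < b ∧ 0 ≤ a ∧ 0 ≤ c ∧ 4 ≤ r ∧ 0 < k ∧ k < r - 2 ∧
        ψ = (fun t => α * psi r a b c t) ∧
        M 0 f ≤ M 0 ψ ∧ M (r - 2) f ≤ M (r - 2) ψ ∧ M (r - 1) f ≤ M (r - 1) ψ ∧
          M r f ≤ M r ψ))
    (ξ η : ℝ) (heq : f ξ = ψ η) :
    |deriv f ξ| ≤ |deriv ψ η| := by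
  rcases hcase with ⟨α, a, b, hα, hb, ha, hr, -, -, hψ, hM₀, hMa, hMr⟩ |
    ⟨α, b, c, hα, hb, hc, hr, -, -, hψ, hM₀, hMc, hMr⟩ |
    ⟨α, a, b, c, hα, hb, ha, hc, hr, -, -, hψ, hM₀, hMc, hMa, hMr⟩
  · exact stmt15_general (by omega) hα ha hb le_rfl hf hψ hM₀ (.inl rfl) (.inr hMa) hMr heq
  · exact stmt15_general (by omega) hα le_rfl hb hc hf hψ hM₀ (.inr hMc) (.inl rfl) hMr heq
  · exact stmt15_general (by omega) hα ha hb hc hf hψ hM₀ (.inr hMc) (.inr hMa) hMr heq
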